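/- Let N ≥ 2k+3 and let A ∈ ℝ^{N×N} be the adjacency matrix of the unweighted path graph on N vertices (A_{ij} = 1 iff |i−j| = 1), D its degree matrix, and A_n = D^{−1/2} A D^{−1/2} the normalized adjacency matrix. Let H_HP = (1/2^k)(I_N − A_n)^k. Then H_HP annihilates polynomial graph signals up to degree 2k−1 subject to a graph-border effect of T = 2(k+1) entries: for every polynomial p of degree at most 2k−1, the signal x with x_j = p(j) satisfies (H_HP x)_i = 0 for every index i with k+1 ≤ i ≤ N−2−k. -/

import Mathlib

/-!
Where the degree is constantly `2`, the matrix `I - A_n` acts as the operator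
`f t ↦ f t - (f (t - 1) + f (t + 1)) / 2` of the bi-infinite path, which is `-1/2` times a centred
second difference; hence `(I - A_n) ^ k` takes a difference of order `2k`, and this kills
polynomials of degree less than `2k`. Only the rows of `A_n` at the two vertices nearest each end
involve an endpoint of degree `1`, and each factor after the first propagates this defect by one
vertex.
-/

open SimpleGraph Polynomial
open scoped Matrix

section SymmetricNormalization

variable {n : Type*} [Fintype n] [DecidableEq n]

/-- The symmetric normalization `D^{-1/2} A D^{-1/2}` of `A` by `D = diag(d)`; when `d` is the
degree function of a graph with adjacency matrix `A`, this is the normalized adjacency matrix. -/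
noncomputable def symmNormalization (d : n → ℝ) (A : Matrix n n ℝ) : Matrix n n ℝ :=
  Matrix.diagonal (fun a => (√(d a))⁻¹) * A * Matrix.diagonal (fun a => (√(d a))⁻¹)

lemma symmNormalization_apply (d : n → ℝ) (A : Matrix n n ℝ) (i j : n) :
    symmNormalization d A i j = A i j / (√(d i) * √(d j)) := by
  rw [symmNormalization, Matrix.mul_diagonal, Matrix.diagonal_mul, div_eq_mul_inv, mul_inv]
  ring

lemma symmNormalization_mulVec_of_locally_const {d : n → ℝ} {A : Matrix n n ℝ} {i : n}
    (hi : 0 ≤ d i) (hd : ∀ j, A i j ≠ 0 → d j = d i) (y : n → ℝ) :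
    (symmNormalization d A *ᵥ y) i = (A *ᵥ y) i / d i := by
  simp only [Matrix.mulVec, dotProduct, Finset.sum_div]
  refine Finset.sum_congr rfl fun j _ => ?_
  rw [symmNormalization_apply]
  by_cases hij : A i j = 0
  · simp [hij]
  · rw [hd j hij, Real.mul_self_sqrt hi, div_mul_eq_mul_div]

end SymmetricNormalization

section PathGraph

variable {N : ℕ}

instance : DecidableRel (pathGraph N).Adj := fun _ _ => decidable_of_iff _ pathGraph_adj.symm

lemma neighborFinset_pathGraph_of_interior
    (i : Fin N) (hi : 0 < (i : ℕ)) (hiN : (i : ℕ) + 1 < N) :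
    (pathGraph N).neighborFinset i = {⟨i - 1, by omega⟩, ⟨i + 1, hiN⟩} := by
  ext j
  simp only [mem_neighborFinset, pathGraph_adj, Finset.mem_insert, Finset.mem_singleton,
    Fin.ext_iff]
  omega

lemma adjMatrix_pathGraph_mulVec_of_interior {R : Type*} [NonAssocSemiring R] (y : Fin N → R)
    (i : Fin N) (hi : 0 < (i : ℕ)) (hiN : (i : ℕ) + 1 < N) :
    ((pathGraph N).adjMatrix R *ᵥ y) i = y ⟨i - 1, by omega⟩ + y ⟨i + 1, hiN⟩ := by
  rw [adjMatrix_mulVec_apply, neighborFinset_pathGraph_of_interior i hi hiN, Finset.sum_pair]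
  simp only [ne_eq, Fin.mk.injEq]
  omega

lemma symmNormalization_pathGraph_mulVec_of_interior {d : Fin N → ℝ}
    (hd : ∀ i : Fin N, 0 < (i : ℕ) → (i : ℕ) + 1 < N → d i = 2) (y : Fin N → ℝ) (i : Fin N)
    (hi : 2 ≤ (i : ℕ)) (hiN : (i : ℕ) + 2 < N) :
    (symmNormalization d ((pathGraph N).adjMatrix ℝ) *ᵥ y) i =
      ((pathGraph N).adjMatrix ℝ *ᵥ y) i / 2 := by
  have hdi : d i = 2 := hd i (by omega) (by omega)
  rw [symmNormalization_mulVec_of_locally_const (by rw [hdi]; norm_num), hdi]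
  intro j hij
  have hadj : (pathGraph N).Adj i j := by simpa [adjMatrix_apply] using hij
  rw [pathGraph_adj] at hadj
  rw [hdi, hd j (by omega) (by omega)]

end PathGraph

section LineLaplacian

variable {K : Type*} [Field K]

/-- The operator `I - A_n` of the bi-infinite path, on functions of a position `t`. Positions range
over the whole field, so that a polynomial acts through its evaluation map. -/
def lineLaplacian (f : K → K) (t : K) : K :=
  f t - (f (t - 1) + f (t + 1)) / 2

/-- Only the factors after the first widen the border of width `r`, hence the `+ 1` in `hi`. -/
lemma one_sub_pow_mulVec_eq_lineLaplacian_iterate {N r : ℕ} (hr : 0 < r)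
    {B : Matrix (Fin N) (Fin N) K}
    (hB : ∀ (y : Fin N → K) (i : Fin N), r ≤ (i : ℕ) → (i : ℕ) + r < N →
      (B *ᵥ y) i = ((pathGraph N).adjMatrix K *ᵥ y) i / 2)
    (f : K → K) (m : ℕ) (i : Fin N) (hi : r + m ≤ i + 1) (hiN : i + m + r ≤ N) :
    ((1 - B) ^ m *ᵥ fun j : Fin N => f (j : ℕ)) i = lineLaplacian^[m] f (i : ℕ) := by
  induction m generalizing i with
  | zero => simp
  | succ m ih =>
    rw [pow_succ', ← Matrix.mulVec_mulVec, Matrix.sub_mulVec, Matrix.one_mulVec, Pi.sub_apply,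
      hB _ i (by omega) (by omega),
      adjMatrix_pathGraph_mulVec_of_interior _ i (by omega) (by omega),
      ih i (by omega) (by omega), ih ⟨i - 1, _⟩ (by simp only; omega) (by simp only; omega),
      ih ⟨i + 1, _⟩ (by simp only; omega) (by simp only; omega), Function.iterate_succ_apply',
      lineLaplacian, Nat.cast_pred (by omega), Nat.cast_succ]

variable [NeZero (2 : K)]

lemma lineLaplacian_eq_fwdDiff (f : K → K) (t : K) :
    lineLaplacian f t = -1 / 2 * (fwdDiff 1)^[2] f (t - 1) := by
  have two_ne : (2 : K) ≠ 0 := two_ne_zero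
  simp only [lineLaplacian, Function.iterate_succ, Function.iterate_zero, Function.comp_apply, id,
    fwdDiff, sub_add_cancel]
  field_simp
  ring

lemma lineLaplacian_iterate_eq_fwdDiff (f : K → K) (m : ℕ) (t : K) :
    lineLaplacian^[m] f t = (-1 / 2) ^ m * (fwdDiff 1)^[2 * m] f (t - m) := by
  induction m generalizing t with
  | zero => simp
  | succ m ih =>
    have shifted : lineLaplacian^[m] f =
        (-1 / 2 : K) ^ m • fun s => (fwdDiff 1)^[2 * m] f (s + -(m : K)) := by
      ext s
      rw [ih, Pi.smul_apply, smul_eq_mul, sub_eq_add_neg]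
    calc lineLaplacian^[m + 1] f t
        = -1 / 2 * (fwdDiff 1)^[2] (lineLaplacian^[m] f) (t - 1) := by
          rw [Function.iterate_succ_apply', lineLaplacian_eq_fwdDiff]
      _ = -1 / 2 * ((-1 / 2) ^ m * (fwdDiff 1)^[2] ((fwdDiff 1)^[2 * m] f) (t - 1 + -(m : K))) := by
          rw [shifted, fwdDiff_iter_const_smul, Pi.smul_apply, smul_eq_mul, fwdDiff_iter_comp_add]
      _ = (-1 / 2) ^ (m + 1) * (fwdDiff 1)^[2 * (m + 1)] f (t - (m + 1 : ℕ)) := by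
          rw [← Function.iterate_add_apply, ← mul_assoc, ← pow_succ', mul_add_one, add_comm 2,
            Nat.cast_succ, ← sub_eq_add_neg, sub_sub, add_comm (1 : K)]

lemma lineLaplacian_iterate_eval_eq_zero {p : K[X]} {m : ℕ} (hp : p.natDegree < 2 * m) :
    lineLaplacian^[m] p.eval = 0 := by
  ext t
  rw [lineLaplacian_iterate_eq_fwdDiff, fwdDiff_iter_eq_zero_of_degree_lt hp, Pi.zero_apply,
    mul_zero, Pi.zero_apply]

end LineLaplacian

/-- the path-graph HGSWT high-pass filter `(1/2^k)(I − A_n)^k` annihilates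
polynomial graph signals of degree at most `2k−1`, subject to a graph-border effect of
`T = 2(k+1)` entries. -/
theorem path_hgswt_highpass_annihilation
    (N k : ℕ) (hk : 1 ≤ k) (hN : 2 * k + 3 ≤ N)
    (A : Matrix (Fin N) (Fin N) ℝ)
    (hA : ∀ a b : Fin N, A a b = if (a : ℕ) + 1 = (b : ℕ) ∨ (b : ℕ) + 1 = (a : ℕ) then 1 else 0)
    (deg : Fin N → ℝ)
    (hdeg : ∀ a : Fin N, deg a = if (a : ℕ) = 0 ∨ (a : ℕ) = N - 1 then 1 else 2)
    (An : Matrix (Fin N) (Fin N) ℝ)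
    (hAn : An = Matrix.diagonal (fun a => (Real.sqrt (deg a))⁻¹) * A *
      Matrix.diagonal (fun a => (Real.sqrt (deg a))⁻¹))
    (H : Matrix (Fin N) (Fin N) ℝ)
    (hH : H = (1 / 2 ^ k : ℝ) • ((1 : Matrix (Fin N) (Fin N) ℝ) - An) ^ k)
    (p : Polynomial ℝ) (hp : p.natDegree ≤ 2 * k - 1)
    (x : Fin N → ℝ) (hx : ∀ j : Fin N, x j = p.eval ((j : ℕ) : ℝ))
    (i : Fin N) (hi1 : k + 1 ≤ (i : ℕ)) (hi2 : (i : ℕ) ≤ N - 2 - k) :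
    H.mulVec x i = 0 := by
  have hA_path : A = (pathGraph N).adjMatrix ℝ := by
    ext a b
    simp only [hA, adjMatrix_apply, pathGraph_adj]
  have hdeg_interior (a : Fin N) (ha : 0 < (a : ℕ)) (haN : (a : ℕ) + 1 < N) : deg a = 2 := by
    rw [hdeg, if_neg (by omega)]
  have hAn_path : An = symmNormalization deg ((pathGraph N).adjMatrix ℝ) := by
    rw [hAn, hA_path, symmNormalization]
  have hAn_averages := symmNormalization_pathGraph_mulVec_of_interior hdeg_interior
  rw [hH, hAn_path, Matrix.smul_mulVec, Pi.smul_apply, funext hx,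
    one_sub_pow_mulVec_eq_lineLaplacian_iterate two_pos hAn_averages p.eval k i
      (by omega) (by omega),
    lineLaplacian_iterate_eval_eq_zero (by omega), Pi.zero_apply, smul_zero]
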